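/- Let n ≥ 1 and λ, μ ∈ ℂ, and weight the vertices of the cycle C_{2n} by assigning λ_i = λ when i is even and λ_i = μ when i is odd. Let α, β ∈ ℂ be the two roots (with multiplicity) of the quadratic X² − (λ + μ + 1)·X + λμ. Then the multivariate independence polynomial of C_{2n} with these weights equals α^n + β^n. -/

import Mathlib

attribute [local instance] Classical.propDecidable

/-- Multivariate independence polynomial of the induced subgraph `G[W]`:
the sum over all independent sets `S ⊆ W` of `∏ v ∈ S, lam v`. -/
noncomputable def indepPolyOn {V : Type*} [Fintype V] (G : SimpleGraph V)
    (lam : V → ℂ) (W : Finset V) : ℂ :=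
  ∑ S ∈ W.powerset, if (∀ u ∈ S, ∀ v ∈ S, ¬ G.Adj u v) then ∏ v ∈ S, lam v else 0

/-- Multivariate independence polynomial `Z_{G,λ}`. -/
noncomputable def indepPoly {V : Type*} [Fintype V] (G : SimpleGraph V)
    (lam : V → ℂ) : ℂ :=
  indepPolyOn G lam Finset.univ

/-- The subdivided claw `S_{t,t,t}`: three paths of length `t` sharing one common
endpoint (the vertex `none`). -/
def subdividedClaw (t : ℕ) : SimpleGraph (Option (Fin 3 × Fin t)) :=
  SimpleGraph.fromRel (fun a b =>
    match a, b with
    | none, some (_, j) => (j : ℕ) = 0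
    | some (i, j), some (i', j') => i = i' ∧ (j : ℕ) + 1 = (j' : ℕ)
    | _, _ => False)

/-- The open parabolic region `R(k) = {z : (Im z)² < (1/k)·Re z + 1/(4k²)}`. -/
def parabR (k : ℝ) : Set ℂ := {z : ℂ | z.im ^ 2 < z.re / k + 1 / (4 * k ^ 2)}

/-- The closed halfplane `H(t) = {z : Re z ≥ t}`. -/
def halfH (t : ℝ) : Set ℂ := {z : ℂ | t ≤ z.re}


/-- The cycle on vertex set `{0, …, m−1}`, `i` adjacent to `i ± 1 (mod m)`. -/
def cycG (m : ℕ) : SimpleGraph (Fin m) :=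
  SimpleGraph.fromRel (fun i j => ((i : ℕ) + 1) % m = (j : ℕ))

/-!
Think of an independent set of the cycle as a closed walk through the two states vacant and
occupied that never steps from occupied to occupied. Giving a step that leaves the occupied state
at a vertex of weight `x` the weight `x`, and a step that leaves the vacant state the weight `1`,
the weighted count of such walks is the trace of the product of the matrices `!![1, 1; x, 0]`. For
the alternating weights this product is the `n`-th power of a `2 × 2` matrix of trace `λ + μ + 1`
and determinant `λμ`, whose eigenvalues are therefore `α` and `β`.
-/

section Matrix

variable {R κ : Type*}

-- `Fin.cons a σ` and `Fin.snoc σ b` list the sources and the targets of the steps of the walk that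
-- starts at `a`, passes through the states of `σ` and ends at `b`.
theorem prod_ofFn_matrix_apply [CommSemiring R] [Fintype κ] [DecidableEq κ] {m : ℕ}
    (A : Fin (m + 1) → Matrix κ κ R) (a b : κ) :
    (List.ofFn A).prod a b =
      ∑ σ : Fin m → κ, ∏ i, A i (Fin.cons (α := fun _ ↦ κ) a σ i)
        (Fin.snoc (α := fun _ ↦ κ) σ b i) := by
  induction m generalizing a with
  | zero => simp [Fin.snoc]
  | succ m ih =>
    rw [List.ofFn_succ, List.prod_cons, Matrix.mul_apply,
      ← (Fin.consEquiv fun _ ↦ κ).sum_comp, Fintype.sum_prod_type]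
    refine Finset.sum_congr rfl fun c _ ↦ ?_
    rw [ih, Finset.mul_sum]
    refine Finset.sum_congr rfl fun τ _ ↦ ?_
    have snoc_cons : Fin.snoc (α := fun _ ↦ κ) ((Fin.consEquiv fun _ ↦ κ) (c, τ)) b =
        Fin.cons c (Fin.snoc τ b) := (Fin.cons_snoc_eq_snoc_cons c τ b).symm
    rw [Fin.prod_univ_succ (n := m + 1), snoc_cons]
    simp only [Fin.consEquiv_apply, Fin.cons_zero, Fin.cons_succ]

theorem trace_prod_ofFn_matrix [CommSemiring R] [Fintype κ] [DecidableEq κ] {m : ℕ}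
    (A : Fin (m + 1) → Matrix κ κ R) :
    (List.ofFn A).prod.trace = ∑ σ : Fin (m + 1) → κ, ∏ i, A i (σ i) (σ (i + 1)) := by
  rw [← (Fin.consEquiv fun _ ↦ κ).sum_comp, Fintype.sum_prod_type, Matrix.trace]
  simp only [Matrix.diag_apply, prod_ofFn_matrix_apply, Fin.snoc_eq_cons_rotate,
    finRotate_apply, Fin.consEquiv_apply]

theorem sq_fin_two_eq_trace_smul_sub_det_smul_one [CommRing R] (M : Matrix (Fin 2) (Fin 2) R) :
    M ^ 2 = M.trace • M - M.det • 1 := by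
  nontriviality R
  have h := M.aeval_self_charpoly
  simp only [Matrix.charpoly_fin_two, map_add, map_sub, map_pow, map_mul, Polynomial.aeval_X,
    Polynomial.aeval_C, Algebra.algebraMap_eq_smul_one, smul_mul_assoc, one_mul] at h
  rw [← sub_eq_zero, ← h]
  abel

theorem trace_pow_fin_two_eq_pow_add_pow [CommRing R] {M : Matrix (Fin 2) (Fin 2) R} {α β : R}
    (hsum : α + β = M.trace) (hprod : α * β = M.det) (n : ℕ) :
    (M ^ n).trace = α ^ n + β ^ n := by
  induction n using Nat.twoStepInduction with
  | zero => simp [one_add_one_eq_two]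
  | one => simp [hsum]
  | more n ih₀ ih₁ =>
    calc (M ^ (n + 2)).trace
        = M.trace * (M ^ (n + 1)).trace - M.det * (M ^ n).trace := by
          rw [pow_add, sq_fin_two_eq_trace_smul_sub_det_smul_one, mul_sub, mul_smul_comm,
            mul_smul_comm, mul_one, ← pow_succ, Matrix.trace_sub, Matrix.trace_smul,
            Matrix.trace_smul, smul_eq_mul, smul_eq_mul]
      _ = α ^ (n + 2) + β ^ (n + 2) := by rw [ih₀, ih₁, ← hsum, ← hprod]; ring

end Matrix

theorem prod_ofFn_mod {M : Type*} [Monoid M] (k n : ℕ) (f : ℕ → M) :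
    (List.ofFn fun i : Fin (k * n) ↦ f (i % k)).prod =
      (List.ofFn fun j : Fin k ↦ f j).prod ^ n := by
  simp only [List.ofFn_mul', Nat.mul_add_mod, Nat.mod_eq_of_lt (Fin.is_lt _), List.ofFn_const,
    List.prod_flatten, List.map_replicate, List.prod_replicate]

theorem sum_finset_eq_sum_fun_fin_two {V M : Type*} [Fintype V] [DecidableEq V] [AddCommMonoid M]
    (f : Finset V → M) :
    ∑ S, f S = ∑ σ : V → Fin 2, f {v | σ v = 1} := by
  refine Finset.sum_nbij' (fun S v ↦ if v ∈ S then 1 else 0) (fun σ ↦ ({v | σ v = 1} : Finset V))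
    (by simp) (by simp) (by simp) (fun σ _ ↦ ?_) (by simp)
  funext v
  simp only [Finset.mem_filter_univ]
  split <;> lia

theorem indepPoly_eq_sum_fun_fin_two {V : Type*} [Fintype V] [DecidableEq V]
    (G : SimpleGraph V) (w : V → ℂ) :
    indepPoly G w = ∑ σ : V → Fin 2,
      if ∀ u v, G.Adj u v → ¬(σ u = 1 ∧ σ v = 1) then ∏ v, if σ v = 1 then w v else 1 else 0 := by
  rw [indepPoly, indepPolyOn, Finset.powerset_univ, sum_finset_eq_sum_fun_fin_two]
  refine Finset.sum_congr rfl fun σ _ ↦ ?_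
  have independent_iff : (∀ u, σ u = 1 → ∀ v, σ v = 1 → ¬G.Adj u v) ↔
      ∀ u v, G.Adj u v → ¬(σ u = 1 ∧ σ v = 1) := by
    grind
  simp only [Finset.mem_filter_univ, Finset.prod_filter, independent_iff]

theorem cycG_adj_iff {m : ℕ} {u v : Fin (m + 2)} :
    (cycG (m + 2)).Adj u v ↔ v = u + 1 ∨ u = v + 1 := by
  have succ_ne (i : Fin (m + 2)) : i ≠ i + 1 := by simp
  have mod_eq_iff (i j : Fin (m + 2)) : ((i : ℕ) + 1) % (m + 2) = j ↔ i + 1 = j := by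
    rw [Fin.ext_iff, Fin.val_add, Fin.val_one]
  simp only [cycG, SimpleGraph.fromRel_adj, mod_eq_iff]
  grind

section TransferMatrix

variable {R : Type*}

/-- The transfer matrix of the hard-core model at a vertex of weight `x`: the entry at `(a, b)` is
the factor contributed by a vertex in state `a` whose successor is in state `b`, with state `1`
meaning occupied and state `0` vacant. -/
def transferMatrix [Zero R] [One R] (x : R) : Matrix (Fin 2) (Fin 2) R :=
  !![1, 1; x, 0]

theorem transferMatrix_apply [Zero R] [One R] (x : R) (a b : Fin 2) :
    transferMatrix x a b = if ¬(a = 1 ∧ b = 1) then (if a = 1 then x else 1) else 0 := by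
  fin_cases a <;> fin_cases b <;> simp [transferMatrix]

theorem transferMatrix_mul_transferMatrix [NonAssocSemiring R] (x y : R) :
    transferMatrix x * transferMatrix y = !![1 + y, 1; x, x] := by
  simp [transferMatrix]

end TransferMatrix

theorem indepPoly_cycG_eq_trace_prod {m : ℕ} (hm : 2 ≤ m) (w : Fin m → ℂ) :
    indepPoly (cycG m) w = (List.ofFn fun i ↦ transferMatrix (w i)).prod.trace := by
  obtain ⟨m, rfl⟩ := Nat.exists_eq_add_of_le' hm
  rw [indepPoly_eq_sum_fun_fin_two, trace_prod_ofFn_matrix]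
  refine Finset.sum_congr rfl fun σ _ ↦ ?_
  have no_consecutive : (∀ u v, (cycG (m + 2)).Adj u v → ¬(σ u = 1 ∧ σ v = 1)) ↔
      ∀ i, ¬(σ i = 1 ∧ σ (i + 1) = 1) := by
    simp only [cycG_adj_iff]
    grind
  simp only [transferMatrix_apply, no_consecutive, Finset.prod_ite_zero, Finset.mem_univ,
    forall_const]

/-- weight the cycle `C_{2n}` by `λ` on even vertices and `μ` on
odd vertices.  If `α, β` are the two roots (with multiplicity) of
`X² − (λ + μ + 1)X + λμ`, then the independence polynomial equals `αⁿ + βⁿ`. -/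
theorem stmt16 (n : ℕ) (hn : 1 ≤ n) (lam mu α β : ℂ)
    (hsum : α + β = lam + mu + 1) (hprod : α * β = lam * mu) :
    indepPoly (cycG (2 * n))
      (fun i : Fin (2 * n) => if (i : ℕ) % 2 = 0 then lam else mu) =
    α ^ n + β ^ n := by
  have hperiod : (List.ofFn fun i : Fin (2 * n) ↦
      transferMatrix (if (i : ℕ) % 2 = 0 then lam else mu)).prod =
      (transferMatrix lam * transferMatrix mu) ^ n := by
    simpa using prod_ofFn_mod 2 n fun r ↦ transferMatrix (if r = 0 then lam else mu)
  have htrace : α + β = (transferMatrix lam * transferMatrix mu).trace := by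
    rw [hsum, transferMatrix_mul_transferMatrix, Matrix.trace_fin_two_of]
    ring
  have hdet : α * β = (transferMatrix lam * transferMatrix mu).det := by
    rw [hprod, transferMatrix_mul_transferMatrix, Matrix.det_fin_two_of]
    ring
  rw [indepPoly_cycG_eq_trace_prod (by lia), hperiod, trace_pow_fin_two_eq_pow_add_pow htrace hdet]
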